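/- Let f₀ : ℝⁿ → ℝ be a nonconstant polynomial function bounded from below on ℝⁿ and set f* := inf_{x ∈ ℝⁿ} f₀(x). Then f* ≤ c for every c ∈ K₀(f₀) ∪ Σ∞(f₀); in particular f* ≤ min{c : c ∈ K₀(f₀) ∪ Σ∞(f₀)} whenever this set is nonempty. -/

import Mathlib

open MvPolynomial Set Filter
open scoped Classical

noncomputable section

/-- The exponent vector of a monomial, viewed as a point of `ℝⁿ`. -/
def expVec {n : ℕ} (κ : Fin n →₀ ℕ) : Fin n → ℝ := fun j => (κ j : ℝ)

/-- The Newton polyhedron at infinity `Γ(f)`: the convex hull of the support of `f`. -/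
def NewtonPolyhedron {n : ℕ} (f : MvPolynomial (Fin n) ℝ) : Set (Fin n → ℝ) :=
  convexHull ℝ (expVec '' (f.support : Set (Fin n →₀ ℕ)))

/-- `d(q, Γ(f)) := min {⟨q, κ⟩ : κ ∈ Γ(f)}`. -/
def NewtonD {n : ℕ} (f : MvPolynomial (Fin n) ℝ) (q : Fin n → ℝ) : ℝ :=
  sInf ((fun κ : Fin n → ℝ => ∑ j, q j * κ j) '' NewtonPolyhedron f)

/-- `Δ(q, Γ(f)) := {κ ∈ Γ(f) : ⟨q, κ⟩ = d(q, Γ(f))}`. -/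
def NewtonFace {n : ℕ} (f : MvPolynomial (Fin n) ℝ) (q : Fin n → ℝ) : Set (Fin n → ℝ) :=
  {κ ∈ NewtonPolyhedron f | ∑ j, q j * κ j = NewtonD f q}

/-- For a set `Δ ⊆ ℝⁿ`, the polynomial `f_Δ := ∑_{κ ∈ Δ} a_κ x^κ`. -/
def facePoly {n : ℕ} (f : MvPolynomial (Fin n) ℝ) (Δ : Set (Fin n → ℝ)) :
    MvPolynomial (Fin n) ℝ :=
  ∑ κ ∈ f.support.filter (fun κ => expVec κ ∈ Δ), monomial κ (f.coeff κ)

/-- `ℝ^J := {x ∈ ℝⁿ : x_j = 0 for all j ∉ J}`. -/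
def RJ {n : ℕ} (J : Set (Fin n)) : Set (Fin n → ℝ) := {x | ∀ j ∉ J, x j = 0}

/-- The restriction of `f` to `ℝ^J` is not constant. -/
def NotConstOn {n : ℕ} (f : MvPolynomial (Fin n) ℝ) (J : Set (Fin n)) : Prop :=
  ∃ x ∈ RJ J, ∃ y ∈ RJ J, eval x f ≠ eval y f

/-- The Mangasarian–Fromovitz property at infinity for `inf {f 0 x : f i x ≤ 0, i = 1,…,p}`. -/
def MFinfty {n p : ℕ} (f : Fin (p + 1) → MvPolynomial (Fin n) ℝ) : Prop :=
  ∀ J : Set (Fin n), J.Nonempty → ∀ q x : Fin n → ℝ,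
    NewtonD (f 0) q < 0 →
    (∀ i, NotConstOn (f i) J → NewtonFace (f i) q ⊆ RJ J) →
    (∀ j, x j = 0 ↔ j ∉ J) →
    (∀ i, i ≠ 0 → eval x (facePoly (f i) (NewtonFace (f i) q)) ≤ 0) →
    ∃ v : Fin n → ℝ, v ≠ 0 ∧ ∀ i, NotConstOn (f i) J →
      eval x (facePoly (f i) (NewtonFace (f i) q)) = 0 →
      ∑ j, eval x (pderiv j (facePoly (f i) (NewtonFace (f i) q))) * v j < 0

/-- Kouchnirenko non-degeneracy at infinity. -/
def NondegenerateAtInfinity {n : ℕ} (f : MvPolynomial (Fin n) ℝ) : Prop :=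
  ∀ q : Fin n → ℝ, NewtonD f q < 0 →
    ∀ x : Fin n → ℝ, (∀ j, x j ≠ 0) →
      ¬ ∀ j, eval x (pderiv j (facePoly f (NewtonFace f q))) = 0

/-- A convenient polynomial. -/
def Convenient {n : ℕ} (f : MvPolynomial (Fin n) ℝ) : Prop :=
  ∀ j : Fin n, ∃ c : ℝ, 0 < c ∧ c • (Pi.single j 1 : Fin n → ℝ) ∈ NewtonPolyhedron f

/-- A bad face of `Γ(f)`. -/
def BadFace {n : ℕ} (f : MvPolynomial (Fin n) ℝ) (Δ : Set (Fin n → ℝ)) : Prop :=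
  (∃ q : Fin n → ℝ, Δ = NewtonFace f q) ∧
  (0 : Fin n → ℝ) ∈ affineSpan ℝ Δ ∧
  ∃ q : Fin n → ℝ, (∃ i j, q i * q j < 0) ∧
    {κ : Fin n → ℝ | ∑ j, q j * κ j = 0} ∩ NewtonPolyhedron f = Δ

/-- The set of critical values of `f`. -/
def K0 {n : ℕ} (f : MvPolynomial (Fin n) ℝ) : Set ℝ :=
  {c | ∃ x : Fin n → ℝ, (∀ j, eval x (pderiv j f) = 0) ∧ eval x f = c}

/-- `Σ∞(f)`: critical values of `f_Δ` over all bad faces `Δ`. -/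
def SigmaInfty {n : ℕ} (f : MvPolynomial (Fin n) ℝ) : Set ℝ :=
  {c | ∃ Δ : Set (Fin n → ℝ), BadFace f Δ ∧ ∃ x : Fin n → ℝ,
    (∀ j, eval x (pderiv j (facePoly f Δ)) = 0) ∧ eval x (facePoly f Δ) = c}

/-- `Σ∞'(f)`: critical values of `f_Δ` on `(ℝ ∖ {0})ⁿ` over all bad faces `Δ`. -/
def SigmaInfty' {n : ℕ} (f : MvPolynomial (Fin n) ℝ) : Set ℝ :=
  {c | ∃ Δ : Set (Fin n → ℝ), BadFace f Δ ∧ ∃ x : Fin n → ℝ, (∀ j, x j ≠ 0) ∧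
    (∀ j, eval x (pderiv j (facePoly f Δ)) = 0) ∧ eval x (facePoly f Δ) = c}

/-- The Euclidean norm on `Fin k → ℝ`. -/
def euclNorm {k : ℕ} (x : Fin k → ℝ) : ℝ := Real.sqrt (∑ j, (x j) ^ 2)

/-- Basic semialgebraic subsets of `ℝ^m`. -/
def BasicSA {m : ℕ} (A : Set (Fin m → ℝ)) : Prop :=
  ∃ (k l : ℕ) (g : Fin k → MvPolynomial (Fin m) ℝ) (h : Fin l → MvPolynomial (Fin m) ℝ),
    A = {x | (∀ i, eval x (g i) = 0) ∧ ∀ i, 0 < eval x (h i)}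

/-- Semialgebraic subsets of `ℝ^m`: finite unions of basic semialgebraic sets. -/
def IsSA {m : ℕ} (A : Set (Fin m → ℝ)) : Prop :=
  ∃ (N : ℕ) (B : Fin N → Set (Fin m → ℝ)), (∀ i, BasicSA (B i)) ∧ A = ⋃ i, B i

/-- A semialgebraic scalar function on a domain `D ⊆ ℝ` (graph is semialgebraic). -/
def IsSAFunOn (D : Set ℝ) (f : ℝ → ℝ) : Prop :=
  IsSA {z : Fin 2 → ℝ | z 0 ∈ D ∧ z 1 = f (z 0)}

/-- A semialgebraic curve `D → ℝⁿ` (graph is semialgebraic). -/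
def IsSACurve {n : ℕ} (D : Set ℝ) (φ : ℝ → Fin n → ℝ) : Prop :=
  IsSA {z : Fin (n + 1) → ℝ | z 0 ∈ D ∧ ∀ j : Fin n, z j.succ = φ (z 0) j}

/-- A semialgebraic map `ℝⁿ → ℝ^p` (graph is semialgebraic). -/
def IsSAMap {n p : ℕ} (F : (Fin n → ℝ) → (Fin p → ℝ)) : Prop :=
  IsSA {z : Fin (n + p) → ℝ |
    (fun i : Fin p => z (Fin.natAdd n i)) = F (fun j : Fin n => z (Fin.castAdd p j))}

/-!
If `Δ = Δ(q, Γ(f))` is a face whose affine span contains the origin, then `⟨q, ·⟩`, being constant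
on that span, vanishes there, so `d(q, Γ(f)) = 0`. Along the curve
`s ↦ (e^{-s q₁} x₁, …, e^{-s qₙ} xₙ)` the monomial `κ` of `f` is multiplied by `e^{-s ⟨q, κ⟩}`,
which is `1` on `Δ` and tends to `0` off it. Hence every value `f_Δ(x)` is a limit of values
of `f`.
-/

section

variable {n : ℕ} (f : MvPolynomial (Fin n) ℝ) (q : Fin n → ℝ)

theorem eval_monomial_exp_mul (x : Fin n → ℝ) (κ : Fin n →₀ ℕ) (a s : ℝ) :
    eval (fun j => Real.exp (-s * q j) * x j) (monomial κ a) =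
      Real.exp (-s * ∑ j, q j * expVec κ j) * eval x (monomial κ a) := by
  have hfactor : ∏ j, Real.exp (-s * q j) ^ κ j = Real.exp (-s * ∑ j, q j * expVec κ j) := by
    simp only [← Real.exp_nat_mul, ← Real.exp_sum, Finset.mul_sum, expVec]
    congr! 2
    ring
  simp only [eval_monomial, Finsupp.prod_pow]
  simp only [mul_pow, Finset.prod_mul_distrib, hfactor]
  ring

theorem tendsto_exp_neg_mul_atTop_ite {r : ℝ} (hr : 0 ≤ r) :
    Tendsto (fun s : ℝ => Real.exp (-s * r)) atTop (nhds (if r = 0 then 1 else 0)) := by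
  rcases hr.eq_or_lt' with rfl | hpos
  · simp
  · simpa only [if_neg hpos.ne', Function.comp_def, id, neg_mul] using
      Real.tendsto_exp_neg_atTop_nhds_zero.comp (tendsto_id.atTop_mul_const hpos)

theorem eval_facePoly (Δ : Set (Fin n → ℝ)) (x : Fin n → ℝ) :
    eval x (facePoly f Δ) =
      ∑ κ ∈ f.support, (if expVec κ ∈ Δ then 1 else 0) * eval x (monomial κ (f.coeff κ)) := by
  rw [facePoly, map_sum, Finset.sum_filter]
  simp only [ite_mul, one_mul, zero_mul]

variable {f} in
theorem expVec_mem_newtonPolyhedron {κ : Fin n →₀ ℕ} (hκ : κ ∈ f.support) :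
    expVec κ ∈ NewtonPolyhedron f :=
  subset_convexHull ℝ _ ⟨κ, hκ, rfl⟩

theorem isCompact_newtonPolyhedron : IsCompact (NewtonPolyhedron f) :=
  (f.support.finite_toSet.image expVec).isCompact_convexHull (𝕜 := ℝ)

variable {f} in
theorem newtonD_le {κ : Fin n → ℝ} (hκ : κ ∈ NewtonPolyhedron f) :
    NewtonD f q ≤ ∑ j, q j * κ j :=
  csInf_le ((isCompact_newtonPolyhedron f).image (by fun_prop)).bddBelow ⟨κ, hκ, rfl⟩

theorem tendsto_exp_mul_eval_facePoly (x : Fin n → ℝ) :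
    Tendsto (fun s : ℝ =>
        Real.exp (s * NewtonD f q) * eval (fun j => Real.exp (-s * q j) * x j) f)
      atTop (nhds (eval x (facePoly f (NewtonFace f q)))) := by
  have hexpand (s : ℝ) :
      Real.exp (s * NewtonD f q) * eval (fun j => Real.exp (-s * q j) * x j) f =
        ∑ κ ∈ f.support, Real.exp (-s * (∑ j, q j * expVec κ j - NewtonD f q)) *
          eval x (monomial κ (f.coeff κ)) := by
    have hsum (y : Fin n → ℝ) : eval y f = ∑ κ ∈ f.support, eval y (monomial κ (f.coeff κ)) :=
      (congrArg (eval y) f.as_sum).trans (map_sum _ _ _)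
    rw [hsum, Finset.mul_sum]
    refine Finset.sum_congr rfl fun κ _ => ?_
    rw [eval_monomial_exp_mul, ← mul_assoc, ← Real.exp_add]
    congr 2
    ring
  simp only [hexpand, eval_facePoly]
  refine tendsto_finsetSum _ fun κ hκ => Tendsto.mul_const _ ?_
  have hmem := expVec_mem_newtonPolyhedron hκ
  have hface : expVec κ ∈ NewtonFace f q ↔ ∑ j, q j * expVec κ j - NewtonD f q = 0 := by
    rw [sub_eq_zero]
    exact and_iff_right hmem
  simpa only [hface] using tendsto_exp_neg_mul_atTop_ite (sub_nonneg.mpr (newtonD_le q hmem))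

variable {f q} in
theorem newtonD_eq_zero_of_zero_mem_affineSpan
    (hzero : (0 : Fin n → ℝ) ∈ affineSpan ℝ (NewtonFace f q)) : NewtonD f q = 0 := by
  have hspan : EqOn (dotProductBilin ℝ ℝ q).toAffineMap (AffineMap.const ℝ _ (NewtonD f q))
      (affineSpan ℝ (NewtonFace f q)) :=
    AffineMap.eqOn_affineSpan fun _ hκ => hκ.2
  simpa using (hspan hzero).symm

theorem optimal_value_le_critical_general :
    (range fun x : Fin n → ℝ => eval x f) ∪
        {c | ∃ q : Fin n → ℝ, 0 ∈ affineSpan ℝ (NewtonFace f q) ∧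
          ∃ x, eval x (facePoly f (NewtonFace f q)) = c} ⊆
      closure (range fun x : Fin n → ℝ => eval x f) := by
  refine union_subset subset_closure ?_
  rintro _ ⟨q, hzero, x, rfl⟩
  have hlim := tendsto_exp_mul_eval_facePoly f q x
  simp only [newtonD_eq_zero_of_zero_mem_affineSpan hzero, mul_zero, Real.exp_zero, one_mul] at hlim
  exact mem_closure_of_tendsto hlim (.of_forall fun _ => mem_range_self _)

end

/-- The optimal value is a lower bound for `K₀(f₀) ∪ Σ∞(f₀)`. -/
theorem optimal_value_le_critical {n : ℕ} (f₀ : MvPolynomial (Fin n) ℝ)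
    (hnc : ∃ x y : Fin n → ℝ, eval x f₀ ≠ eval y f₀)
    (hbdd : BddBelow (Set.range fun x : Fin n → ℝ => eval x f₀))
    (fstar : ℝ) (hfstar : fstar = sInf (Set.range fun x : Fin n → ℝ => eval x f₀)) :
    ∀ c ∈ K0 f₀ ∪ SigmaInfty f₀, fstar ≤ c := by
  have hlower : fstar ∈ lowerBounds (closure (range fun x : Fin n → ℝ => eval x f₀)) := by
    rw [lowerBounds_closure, hfstar]
    exact fun _ => csInf_le hbdd
  exact fun c hc => hlower <| optimal_value_le_critical_general f₀ <| hc.imp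
    (fun ⟨x, _, hx⟩ => ⟨x, hx⟩)
    fun ⟨_, ⟨⟨q, hq⟩, hzero, _⟩, x, _, hx⟩ => ⟨q, hq ▸ hzero, x, hq ▸ hx⟩
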